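/- Let f : ℝⁿ × ℝ^d → ℝⁿ be C¹, and let Λ : ℝ → ℝ^d be C¹ and exponentially bi-asymptotically constant with decay coefficient ρ > 0, with Λ(τ) → λ⁺ as τ → +∞ and Λ(τ) → λ⁻ as τ → −∞. Then for every α ∈ (0, ρ] and every r > 0, the compactified vector field F_{r,α}(x,s) = ( f(x, Λ_α(s))/r , α(1−s²)/2 ) is continuously differentiable on ℝⁿ × [−1,1]. -/

import Mathlib

open Filter Topology

/-- The time compactification map `g_α(τ) = tanh(ατ/2)`. -/
noncomputable def gcomp (α τ : ℝ) : ℝ := Real.tanh (α * τ / 2)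

/-- Its inverse `h_α(s) = (1/α)·ln((1+s)/(1-s))`. -/
noncomputable def hcomp (α s : ℝ) : ℝ := (1 / α) * Real.log ((1 + s) / (1 - s))

/-- `Λ : ℝ → ℝ^d` is exponentially bi-asymptotically constant with decay coefficient `ρ`:
both limits `lim_{τ→+∞} Λ'(τ)·e^{ρτ}` and `lim_{τ→-∞} Λ'(τ)·e^{-ρτ}` exist. -/
def ExpBiAsympConst {d : ℕ} (Λ : ℝ → Fin d → ℝ) (ρ : ℝ) : Prop :=
  (∃ Lp : Fin d → ℝ, Tendsto (fun τ => Real.exp (ρ * τ) • deriv Λ τ) atTop (𝓝 Lp)) ∧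
  (∃ Lm : Fin d → ℝ, Tendsto (fun τ => Real.exp (-ρ * τ) • deriv Λ τ) atBot (𝓝 Lm))

/-- The compactified input `Λ_α : [-1,1] → ℝ^d`, equal to `Λ ∘ h_α` on `(-1,1)` and to the
future/past limits `lp`, `lm` at `s = 1`, `s = -1` respectively. -/
noncomputable def compInput {d : ℕ} (Λ : ℝ → Fin d → ℝ) (lp lm : Fin d → ℝ)
    (α s : ℝ) : Fin d → ℝ :=
  if s = 1 then lp else if s = -1 then lm else Λ (hcomp α s)

/-- The compactified vector field `F_{r,α}(x,s) = (f(x,Λ_α(s))/r, α(1-s²)/2)` on `ℝⁿ × [-1,1]`. -/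
noncomputable def compField {n d : ℕ} (f : (Fin n → ℝ) × (Fin d → ℝ) → Fin n → ℝ)
    (Λ : ℝ → Fin d → ℝ) (lp lm : Fin d → ℝ) (r α : ℝ) :
    (Fin n → ℝ) × ℝ → (Fin n → ℝ) × ℝ :=
  fun p => (r⁻¹ • f (p.1, compInput Λ lp lm α p.2), α * (1 - p.2 ^ 2) / 2)

/-- The extended phase space `ℝⁿ × [-1,1]`. -/
def compDomain (n : ℕ) : Set ((Fin n → ℝ) × ℝ) := Set.univ ×ˢ Set.Icc (-1) 1

/-! Away from `s = ±1` the input `Λ ∘ h_α` is C¹, so only its endpoint behaviour matters. There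
`h_α' = 2 / (α (1 - s²)) = 2 e^{α h_α} / (α (1 + s)²)`, hence
`(Λ ∘ h_α)' = 2 / (α (1 + s)²) • (e^{α τ} Λ'(τ))` at `τ = h_α(s)`: the blow-up of `h_α'` at `s = 1`
is exactly an exponential weight of rate `α`, which `Λ'` absorbs as soon as `α ≤ ρ`. The end
`s = -1` follows by reversing time, and a continuous function on `[-1, 1]` whose derivative on the
interior has limits at both ends is C¹ up to the boundary. -/

section

open Set Real

variable {E F G : Type*} [NormedAddCommGroup E] [NormedSpace ℝ E] [NormedAddCommGroup F]
  [NormedSpace ℝ F] [NormedAddCommGroup G] [NormedSpace ℝ G]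

theorem contDiffOn_Icc_of_tendsto_deriv {a b : ℝ} (hab : a < b) {c : ℝ → F} {ca' cb' : F}
    (hc : ContDiffOn ℝ 1 c (Ioo a b)) (ha : ContinuousWithinAt c (Ioi a) a)
    (hb : ContinuousWithinAt c (Iio b) b) (ha' : Tendsto (deriv c) (𝓝[>] a) (𝓝 ca'))
    (hb' : Tendsto (deriv c) (𝓝[<] b) (𝓝 cb')) : ContDiffOn ℝ 1 c (Icc a b) := by
  have hU : UniqueDiffOn ℝ (Icc a b) := uniqueDiffOn_Icc hab
  have hdiff : DifferentiableOn ℝ c (Ioo a b) := hc.differentiableOn one_ne_zero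
  have hcont : ContinuousOn (deriv c) (Ioo a b) := hc.continuousOn_deriv_of_isOpen isOpen_Ioo le_rfl
  have hderiv : ∀ s ∈ Icc a b,
      HasDerivWithinAt c (extendFrom (Ioo a b) (deriv c) s) (Icc a b) s := by
    intro s hs
    rcases eq_endpoints_or_mem_Ioo_of_mem_Icc hs with rfl | rfl | hs
    · rw [eq_lim_at_left_extendFrom_Ioo hab ha']
      exact (hasDerivWithinAt_Ici_of_tendsto_deriv hdiff (ha.mono Ioo_subset_Ioi_self)
        (Ioo_mem_nhdsGT hab) ha').mono Icc_subset_Ici_self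
    · rw [eq_lim_at_right_extendFrom_Ioo hab hb']
      exact (hasDerivWithinAt_Iic_of_tendsto_deriv hdiff (hb.mono Ioo_subset_Iio_self)
        (Ioo_mem_nhdsLT hab) hb').mono Icc_subset_Iic_self
    · rw [extendFrom_extends hcont s hs]
      exact (hdiff.differentiableAt (isOpen_Ioo.mem_nhds hs)).hasDerivAt.hasDerivWithinAt
  rw [contDiffOn_one_iff_derivWithin hU]
  exact ⟨fun s hs ↦ (hderiv s hs).differentiableWithinAt,
    (continuousOn_Icc_extendFrom_Ioo hcont ha' hb').congr
      fun s hs ↦ (hderiv s hs).derivWithin (hU s hs)⟩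

theorem exists_tendsto_exp_mul_smul_of_le {α ρ : ℝ} (h : α ≤ ρ) {v : ℝ → F}
    (hv : ∃ L, Tendsto (fun τ ↦ exp (ρ * τ) • v τ) atTop (𝓝 L)) :
    ∃ L, Tendsto (fun τ ↦ exp (α * τ) • v τ) atTop (𝓝 L) := by
  obtain ⟨L, hL⟩ := hv
  rcases h.eq_or_lt with rfl | h
  · exact ⟨L, hL⟩
  have hexp : Tendsto (fun τ ↦ exp ((α - ρ) * τ)) atTop (𝓝 0) :=
    tendsto_exp_atBot.comp (tendsto_id.const_mul_atTop_of_neg (sub_neg.2 h))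
  refine ⟨(0 : ℝ) • L, (hexp.smul hL).congr fun τ ↦ ?_⟩
  rw [smul_smul, ← exp_add, ← add_mul, sub_add_cancel]

theorem hcomp_neg (α s : ℝ) : hcomp α (-s) = -hcomp α s := by
  simp only [hcomp]
  rw [← mul_neg, ← log_inv, inv_div, sub_neg_eq_add, ← sub_eq_add_neg]

theorem exp_mul_hcomp {α s : ℝ} (hα : α ≠ 0) (hs : s ∈ Ioo (-1) 1) :
    exp (α * hcomp α s) = (1 + s) / (1 - s) := by
  have hpos : 0 < (1 + s) / (1 - s) := div_pos (by linarith [hs.1]) (by linarith [hs.2])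
  rw [hcomp, ← mul_assoc, mul_one_div_cancel hα, one_mul, exp_log hpos]

theorem contDiffOn_hcomp (α : ℝ) : ContDiffOn ℝ 1 (hcomp α) (Ioo (-1) 1) := by
  intro s hs
  have hplus : 1 + s ≠ 0 := by linarith [hs.1]
  have hminus : 1 - s ≠ 0 := by linarith [hs.2]
  unfold hcomp
  fun_prop (disch := simp_all)

theorem hasDerivAt_hcomp (α : ℝ) {s : ℝ} (hs : s ∈ Ioo (-1) 1) :
    HasDerivAt (hcomp α) (2 / (α * (1 - s ^ 2))) s := by
  have hplus : 0 < 1 + s := by linarith [hs.1]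
  have hminus : 0 < 1 - s := by linarith [hs.2]
  have hquot := ((hasDerivAt_id' s).const_add 1).fun_div ((hasDerivAt_id' s).const_sub 1) hminus.ne'
  refine ((hquot.log (div_pos hplus hminus).ne').const_mul (1 / α)).congr_deriv ?_
  rw [show 1 - s ^ 2 = (1 + s) * (1 - s) by ring]
  field_simp
  ring

theorem tendsto_hcomp_nhdsLT_one {α : ℝ} (hα : 0 < α) : Tendsto (hcomp α) (𝓝[<] 1) atTop := by
  have hnum : Tendsto (fun s : ℝ ↦ 1 + s) (𝓝[<] 1) (𝓝 (1 + 1)) :=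
    ((continuous_const_add 1).tendsto 1).mono_left nhdsWithin_le_nhds
  have hden : Tendsto (fun s : ℝ ↦ 1 - s) (𝓝[<] 1) (𝓝[>] 0) := by
    refine tendsto_nhdsWithin_iff.2
      ⟨?_, eventually_mem_nhdsWithin.mono fun s (hs : s < 1) ↦ sub_pos.2 hs⟩
    exact ((continuous_const.sub continuous_id).tendsto' 1 0 (sub_self 1)).mono_left
      nhdsWithin_le_nhds
  exact (tendsto_log_atTop.comp
    (hnum.pos_mul_atTop (by norm_num) hden.inv_tendsto_nhdsGT_zero)).const_mul_atTop (by positivity)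

theorem tendsto_hcomp_nhdsGT_neg_one {α : ℝ} (hα : 0 < α) :
    Tendsto (hcomp α) (𝓝[>] (-1)) atBot := by
  refine (tendsto_neg_atTop_atBot.comp
    ((tendsto_hcomp_nhdsLT_one hα).comp tendsto_neg_nhdsGT_neg)).congr fun s ↦ ?_
  rw [Function.comp_apply, Function.comp_apply, hcomp_neg, neg_neg]

theorem deriv_comp_hcomp {Λ : ℝ → F} (hΛ : Differentiable ℝ Λ) {α s : ℝ} (hα : α ≠ 0)
    (hs : s ∈ Ioo (-1) 1) :
    deriv (Λ ∘ hcomp α) s =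
      (2 / (α * (1 + s) ^ 2)) • exp (α * hcomp α s) • deriv Λ (hcomp α s) := by
  have hplus : 1 + s ≠ 0 := by linarith [hs.1]
  have hminus : 1 - s ≠ 0 := by linarith [hs.2]
  rw [((hΛ _).hasDerivAt.scomp s (hasDerivAt_hcomp α hs)).deriv, smul_smul, exp_mul_hcomp hα hs,
    show 1 - s ^ 2 = (1 + s) * (1 - s) by ring]
  congr 1
  field_simp

theorem exists_tendsto_deriv_comp_hcomp_nhdsLT_one {Λ : ℝ → F} (hΛ : Differentiable ℝ Λ)
    {α ρ : ℝ} (hα : α ∈ Ioc 0 ρ)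
    (hL : ∃ L, Tendsto (fun τ ↦ exp (ρ * τ) • deriv Λ τ) atTop (𝓝 L)) :
    ∃ L', Tendsto (deriv (Λ ∘ hcomp α)) (𝓝[<] 1) (𝓝 L') := by
  obtain ⟨L', hL'⟩ := exists_tendsto_exp_mul_smul_of_le hα.2 hL
  have hcoeff : Tendsto (fun s ↦ 2 / (α * (1 + s) ^ 2)) (𝓝[<] 1) (𝓝 (2 / (α * (1 + 1) ^ 2))) := by
    refine tendsto_nhdsWithin_of_tendsto_nhds (ContinuousAt.tendsto ?_)
    have : α ≠ 0 := hα.1.ne'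
    fun_prop (disch := positivity)
  refine ⟨_, (hcoeff.smul (hL'.comp (tendsto_hcomp_nhdsLT_one hα.1))).congr' ?_⟩
  filter_upwards [Ioo_mem_nhdsLT (show (-1 : ℝ) < 1 by norm_num)] with s hs
  exact (deriv_comp_hcomp hΛ hα.1.ne' hs).symm

theorem exists_tendsto_deriv_comp_hcomp_nhdsGT_neg_one {Λ : ℝ → F} (hΛ : Differentiable ℝ Λ)
    {α ρ : ℝ} (hα : α ∈ Ioc 0 ρ)
    (hL : ∃ L, Tendsto (fun τ ↦ exp (-ρ * τ) • deriv Λ τ) atBot (𝓝 L)) :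
    ∃ L', Tendsto (deriv (Λ ∘ hcomp α)) (𝓝[>] (-1)) (𝓝 L') := by
  obtain ⟨L, hL⟩ := hL
  let Λrev : ℝ → F := fun τ ↦ Λ (-τ)
  have hrev : Tendsto (fun τ ↦ exp (ρ * τ) • deriv Λrev τ) atTop (𝓝 (-L)) := by
    refine (hL.comp tendsto_neg_atTop_atBot).neg.congr fun τ ↦ ?_
    simp only [Function.comp_apply, neg_mul_neg, Λrev, deriv_comp_neg, smul_neg]
  obtain ⟨L', hL'⟩ :=
    exists_tendsto_deriv_comp_hcomp_nhdsLT_one (Λ := Λrev) (hΛ.comp differentiable_neg) hα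
      ⟨-L, hrev⟩
  have hreflect : Λ ∘ hcomp α = fun s ↦ (Λrev ∘ hcomp α) (-s) := by
    funext s
    simp only [Λrev, Function.comp_apply, hcomp_neg, neg_neg]
  refine ⟨-L', (hL'.comp tendsto_neg_nhdsGT_neg).neg.congr fun s ↦ ?_⟩
  rw [hreflect, deriv_comp_neg, Function.comp_apply]

theorem contDiffOn_Icc_of_eqOn_comp_hcomp {Λ : ℝ → F} (hΛ : ContDiff ℝ 1 Λ) {α ρ : ℝ}
    (hα : α ∈ Ioc 0 ρ) (hLp : ∃ L, Tendsto (fun τ ↦ exp (ρ * τ) • deriv Λ τ) atTop (𝓝 L))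
    (hLm : ∃ L, Tendsto (fun τ ↦ exp (-ρ * τ) • deriv Λ τ) atBot (𝓝 L)) {c : ℝ → F}
    (hc : EqOn c (Λ ∘ hcomp α) (Ioo (-1) 1)) (hp : Tendsto Λ atTop (𝓝 (c 1)))
    (hm : Tendsto Λ atBot (𝓝 (c (-1)))) : ContDiffOn ℝ 1 c (Icc (-1) 1) := by
  have hlt : (-1 : ℝ) < 1 := by norm_num
  have hderiv : EqOn (deriv (Λ ∘ hcomp α)) (deriv c) (Ioo (-1) 1) :=
    hc.symm.deriv isOpen_Ioo
  have hdiff : Differentiable ℝ Λ := hΛ.differentiable one_ne_zero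
  obtain ⟨cp', hcp'⟩ := exists_tendsto_deriv_comp_hcomp_nhdsLT_one hdiff hα hLp
  obtain ⟨cm', hcm'⟩ := exists_tendsto_deriv_comp_hcomp_nhdsGT_neg_one hdiff hα hLm
  refine contDiffOn_Icc_of_tendsto_deriv hlt ((hΛ.comp_contDiffOn (contDiffOn_hcomp α)).congr hc)
    ?_ ?_ (hcm'.congr' (hderiv.eventuallyEq_of_mem (Ioo_mem_nhdsGT hlt)))
    (hcp'.congr' (hderiv.eventuallyEq_of_mem (Ioo_mem_nhdsLT hlt)))
  · exact (hm.comp (tendsto_hcomp_nhdsGT_neg_one hα.1)).congr'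
      (hc.symm.eventuallyEq_of_mem (Ioo_mem_nhdsGT hlt))
  · exact (hp.comp (tendsto_hcomp_nhdsLT_one hα.1)).congr'
      (hc.symm.eventuallyEq_of_mem (Ioo_mem_nhdsLT hlt))

section

variable {d : ℕ} (Λ : ℝ → Fin d → ℝ) (lp lm : Fin d → ℝ) (α : ℝ)

theorem compInput_one : compInput Λ lp lm α 1 = lp :=
  if_pos rfl

theorem compInput_neg_one : compInput Λ lp lm α (-1) = lm := by
  rw [compInput, if_neg (by norm_num), if_pos rfl]

theorem eqOn_compInput_comp_hcomp : EqOn (compInput Λ lp lm α) (Λ ∘ hcomp α) (Ioo (-1) 1) := by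
  intro s hs
  rw [compInput, if_neg hs.2.ne, if_neg hs.1.ne', Function.comp_apply]

end

/-- Here `c` is the compactified input `Λ_α`, and `f` stands for the already rescaled `r⁻¹ • f`. -/
theorem stmt1_general {f : E × F → G} (hf : ContDiff ℝ 1 f) {Λ : ℝ → F} (hΛ : ContDiff ℝ 1 Λ)
    {α ρ : ℝ} (hα : α ∈ Ioc 0 ρ)
    (hLp : ∃ L, Tendsto (fun τ ↦ exp (ρ * τ) • deriv Λ τ) atTop (𝓝 L))
    (hLm : ∃ L, Tendsto (fun τ ↦ exp (-ρ * τ) • deriv Λ τ) atBot (𝓝 L)) {c : ℝ → F}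
    (hc : EqOn c (Λ ∘ hcomp α) (Ioo (-1) 1)) (hp : Tendsto Λ atTop (𝓝 (c 1)))
    (hm : Tendsto Λ atBot (𝓝 (c (-1)))) :
    ContDiffOn ℝ 1 (fun p : E × ℝ ↦ (f (p.1, c p.2), α * (1 - p.2 ^ 2) / 2))
      (univ ×ˢ Icc (-1) 1) := by
  have hinput : ContDiffOn ℝ 1 (fun p : E × ℝ ↦ c p.2) (univ ×ˢ Icc (-1) 1) :=
    (contDiffOn_Icc_of_eqOn_comp_hcomp hΛ hα hLp hLm hc hp hm).comp contDiffOn_snd fun _ hp ↦ hp.2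
  have htime : ContDiff ℝ 1 (fun p : E × ℝ ↦ α * (1 - p.2 ^ 2) / 2) := by fun_prop
  exact (hf.comp_contDiffOn (contDiffOn_fst.prodMk hinput)).prodMk htime.contDiffOn

end

/-- If `f` is C¹ and `Λ` is C¹ and exponentially bi-asymptotically constant
with decay coefficient `ρ > 0` and limits `lp`, `lm`, then for every `α ∈ (0,ρ]` and every
`r > 0` the compactified vector field `F_{r,α}` is continuously differentiable on
`ℝⁿ × [-1,1]`. -/
theorem stmt1 {n d : ℕ} (f : (Fin n → ℝ) × (Fin d → ℝ) → Fin n → ℝ)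
    (hf : ContDiff ℝ 1 f)
    (Λ : ℝ → Fin d → ℝ) (ρ : ℝ) (hρ : 0 < ρ)
    (hΛ : ContDiff ℝ 1 Λ) (hbac : ExpBiAsympConst Λ ρ)
    (lp lm : Fin d → ℝ)
    (hp : Tendsto Λ atTop (𝓝 lp)) (hm : Tendsto Λ atBot (𝓝 lm)) :
    ∀ α ∈ Set.Ioc (0 : ℝ) ρ, ∀ r > (0 : ℝ),
      ContDiffOn ℝ 1 (compField f Λ lp lm r α) (compDomain n) := by
  intro α hα r _
  exact stmt1_general (hf.const_smul r⁻¹) hΛ hα hbac.1 hbac.2 (eqOn_compInput_comp_hcomp Λ lp lm α)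
    (by rwa [compInput_one]) (by rwa [compInput_neg_one])
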